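/- Fix a real number c with 0 ≤ c < 1 and set ξ∧ = (4−c)/3 and η∧ = (3 − 4c + c²)/(3√(1−c²)). Then ψ(0, ξ∧, η∧) = 0, ∂ψ/∂t(1, ξ∧, η∧) = 0, and ψ(t, ξ∧, η∧) ≥ 0 for all t ∈ [−1,1]; moreover, for every pair (ξ̄, η̄) with ξ̄ > 0 such that ψ(t, ξ̄, η̄) ≥ 0 for all t ∈ [−1,1] and sup over t ∈ [−1,1] of |ψ(t, ξ̄, η̄)| ≤ sup over t ∈ [−1,1] of |ψ(t, ξ∧, η∧)|, one has (ξ̄, η̄) = (ξ∧, η∧); i.e., (ξ∧, η∧) induces the unique optimal outer cubic G⁰ approximant. -/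

import Mathlib

/-- Simplified radial error of the cubic G⁰ Bézier approximant of the unit circular arc. -/
noncomputable def psiC (c t ξ η : ℝ) : ℝ :=
  (1/16) * (t^2 - 1) *
    ((3*η - Real.sqrt (1 - c^2))^2*t^4
      + (16*(1 - c^2) - 9*(η + Real.sqrt (1 - c^2))^2 + 9*(ξ - c)^2)*t^2
      + (16 - (3*ξ + c)^2))

noncomputable def g1 (c ξ : ℝ) : ℝ :=
  2187*ξ^3 + 3807*c*ξ^2 + (1953*c^2 - 3840)*ξ + 245*c^3 - 4352*c

noncomputable def ximin (c : ℝ) : ℝ := (-5*c + 8*Real.sqrt 2*Real.sqrt (9 - c^2))/27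

noncomputable def ximax (c : ℝ) : ℝ := (4 - c)/3

/-- Sup over `t ∈ [−1,1]` of `|f t|`. -/
noncomputable def errSup (f : ℝ → ℝ) : ℝ :=
  sSup ((fun t => |f t|) '' Set.Icc (-1 : ℝ) 1)

theorem key_alg (c s h ξ η : ℝ) (hc0 : 0 ≤ c) (hc1 : c < 1) (hs : 0 < s) (hss : s^2 = 1 - c^2)
    (hh : 3*h*s = 3 - 4*c + c^2) (h1 : 4 ≤ 3*ξ + c) (h2 : 1 ≤ η*s + ξ*c)
    (hF : 2*(3*η - s)^2 + 72*(η*s + ξ*c - 1) + 6*((3*ξ+c)^2 - 16) ≤ 2*(3*h-s)^2) :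
    ξ = (4-c)/3 ∧ η = h := by
  obtain ⟨x, hx⟩ : ∃ x, x = 3*ξ + c - 4 := ⟨_, rfl⟩
  obtain ⟨y, hy⟩ : ∃ y, y = h - η := ⟨_, rfl⟩
  obtain ⟨a, ha⟩ : ∃ a, a = 3*h - s := ⟨_, rfl⟩
  have hx0 : 0 ≤ x := by linarith
  have has : a*s = 2*(1-c)^2 := by rw [ha]; nlinarith
  have ha0 : 0 < a := by
    have : 0 < a*s := by rw [has]; have : 0 < 1 - c := by linarith
                         positivity
    exact pos_of_mul_pos_left this hs.le
  have hξ : ξ = (x + 4 - c)/3 := by linarith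
  have hη : η = h - y := by linarith
  have e2 : η*s + ξ*c - 1 = x*c/3 - y*s := by rw [hη, hξ]; linarith
  have e1 : 3*η - s = a - 3*y := by linarith
  have e3 : 3*ξ + c = x + 4 := by linarith
  have h2' : 0 ≤ x*c/3 - y*s := by linarith
  rw [e1, e2, e3, ← ha] at hF
  have main : x = 0 ∧ y = 0 := by
    rcases le_or_gt y 0 with hy0 | hy0
    · have k : 0 ≤ (-y)*a := mul_nonneg (by linarith) ha0.le
      have hx1 : x = 0 := by nlinarith [sq_nonneg y, sq_nonneg x]
      subst hx1
      refine ⟨rfl, ?_⟩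
      have : y^2 ≤ 0 := by nlinarith
      exact pow_eq_zero_iff (two_ne_zero) |>.1 (le_antisymm this (sq_nonneg y))
    · exfalso
      have b1 : (a*y)*s^2 ≤ (2/3*x)*s^2 := by
        have : (a*y)*s^2 = 2*(1-c)^2*(y*s) := by rw [← has]; ring
        rw [this, hss]
        have t1 : 2*(1-c)^2*(y*s) ≤ 2*(1-c)^2*(x*c/3) :=
          mul_le_mul_of_nonneg_left (by linarith) (by positivity)
        have t2 : (1-c)^2*c ≤ 1 - c^2 := by
          have : 0 ≤ (1-c)*((1+c) - (1-c)*c) := mul_nonneg (by linarith) (by nlinarith)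
          nlinarith
        nlinarith [mul_le_mul_of_nonneg_left t2 hx0]
      have b2 : a*y ≤ 2/3*x := le_of_mul_le_mul_right b1 (by positivity)
      have hx1 : x = 0 := by nlinarith [sq_nonneg y, sq_nonneg x]
      subst hx1
      nlinarith [mul_pos hy0 hs]
  obtain ⟨hx1, hy1⟩ := main
  constructor
  · rw [hξ, hx1]; ring
  · rw [hη, hy1]; ring

theorem psi_hat (c : ℝ) (hc0 : 0 ≤ c) (hc1 : c < 1) (t : ℝ) :
    psiC c t ((4 - c)/3) ((3 - 4*c + c^2)/(3*Real.sqrt (1 - c^2))) =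
      (1/16) * (3*((3 - 4*c + c^2)/(3*Real.sqrt (1 - c^2))) - Real.sqrt (1 - c^2))^2 *
        (t^2*(t^2-1)^2) := by
  have hpos : 0 < 1 - c^2 := by nlinarith
  have hs : 0 < Real.sqrt (1 - c^2) := Real.sqrt_pos.2 hpos
  have hss : Real.sqrt (1 - c^2)^2 = 1 - c^2 := Real.sq_sqrt hpos.le
  unfold psiC
  obtain ⟨h, hdef⟩ : ∃ h, h = (3 - 4*c + c^2)/(3*Real.sqrt (1 - c^2)) := ⟨_, rfl⟩
  rw [← hdef]
  have hh : 3*h*Real.sqrt (1 - c^2) = 3 - 4*c + c^2 := by rw [hdef]; field_simp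
  generalize Real.sqrt (1 - c^2) = s at *
  linear_combination (1/16)*(t^2-1)*t^2*(-8*hh - 8*hss)

theorem psi_cont (c ξ η : ℝ) : Continuous (fun t => psiC c t ξ η) := by
  unfold psiC; fun_prop

theorem le_errSup (c ξ η t : ℝ) (ht : t ∈ Set.Icc (-1:ℝ) 1) :
    psiC c t ξ η ≤ errSup (fun t => psiC c t ξ η) := by
  unfold errSup
  refine (le_abs_self _).trans (le_csSup ?_ ⟨t, ht, rfl⟩)
  exact (isCompact_Icc.image (psi_cont c ξ η).abs).bddAbove

/-- `(ξ∧, η∧) = ((4−c)/3, (3−4c+c²)/(3√(1−c²)))` induces the unique optimal outer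
cubic G⁰ approximant. -/
theorem stmt_15 (c : ℝ) (hc0 : 0 ≤ c) (hc1 : c < 1) :
    psiC c 0 ((4 - c)/3) ((3 - 4*c + c^2)/(3*Real.sqrt (1 - c^2))) = 0 ∧
    deriv (fun t => psiC c t ((4 - c)/3) ((3 - 4*c + c^2)/(3*Real.sqrt (1 - c^2)))) 1 = 0 ∧
    (∀ t ∈ Set.Icc (-1 : ℝ) 1,
      0 ≤ psiC c t ((4 - c)/3) ((3 - 4*c + c^2)/(3*Real.sqrt (1 - c^2)))) ∧
    ∀ ξb ηb : ℝ, 0 < ξb → (∀ t ∈ Set.Icc (-1 : ℝ) 1, 0 ≤ psiC c t ξb ηb) →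
      errSup (fun t => psiC c t ξb ηb) ≤
        errSup (fun t => psiC c t ((4 - c)/3) ((3 - 4*c + c^2)/(3*Real.sqrt (1 - c^2)))) →
      ξb = (4 - c)/3 ∧ ηb = (3 - 4*c + c^2)/(3*Real.sqrt (1 - c^2)) := by
  have hpos : 0 < 1 - c^2 := by nlinarith
  have hs : 0 < Real.sqrt (1 - c^2) := Real.sqrt_pos.2 hpos
  have hss : Real.sqrt (1 - c^2)^2 = 1 - c^2 := Real.sq_sqrt hpos.le
  have hat := psi_hat c hc0 hc1
  obtain ⟨h, hdef⟩ : ∃ h, h = (3 - 4*c + c^2)/(3*Real.sqrt (1 - c^2)) := ⟨_, rfl⟩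
  rw [← hdef] at hat ⊢
  have hh : 3*h*Real.sqrt (1 - c^2) = 3 - 4*c + c^2 := by rw [hdef]; field_simp
  refine ⟨by rw [hat]; ring, ?_, fun t _ => by rw [hat]; positivity, ?_⟩
  · have : (fun t => psiC c t ((4 - c)/3) h) = fun t =>
        (1/16) * (3*h - Real.sqrt (1 - c^2))^2 * (t^2*(t^2-1)^2) := funext hat
    rw [this]
    have hd : HasDerivAt (fun t : ℝ => t^2*(t^2-1)^2) 0 1 := by
      have h1 : HasDerivAt (fun t : ℝ => t^2) (2*1) 1 := by
        simpa using hasDerivAt_pow 2 (1:ℝ)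
      have h3 : HasDerivAt (fun t : ℝ => (t^2-1)^2) (2*((1:ℝ)^2-1)^1*(2*1)) 1 := by
        simpa using (h1.sub_const 1).fun_pow 2
      have h4 := h1.fun_mul h3
      have e : (2*1*((1:ℝ)^2-1)^2 + 1^2*(2*((1:ℝ)^2-1)^1*(2*1))) = 0 := by norm_num
      rw [e] at h4
      exact h4
    rw [(hd.const_mul ((1/16) * (3*h - Real.sqrt (1 - c^2))^2)).deriv, mul_zero]
  · intro ξ η hξ hnn hle
    have hsup : errSup (fun t => psiC c t ((4 - c)/3) h) ≤
        (1/16) * (3*h - Real.sqrt (1 - c^2))^2 * (4/27) := by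
      unfold errSup
      refine csSup_le (Set.Nonempty.image _ ⟨0, by norm_num⟩) ?_
      rintro _ ⟨t, ht, rfl⟩
      simp only [hat]
      rw [abs_of_nonneg (by positivity)]
      refine mul_le_mul_of_nonneg_left ?_ (by positivity)
      have : t^2 ≤ 1 := by nlinarith [ht.1, ht.2]
      nlinarith [mul_nonneg (sq_nonneg (t^2-1/3)) (show 0 ≤ 4/3 - t^2 by linarith)]
    have hq : ∀ t ∈ Set.Ico (0:ℝ) 1, (3*η - Real.sqrt (1 - c^2))^2*t^4
      + (16*(1 - c^2) - 9*(η + Real.sqrt (1 - c^2))^2 + 9*(ξ - c)^2)*t^2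
      + (16 - (3*ξ + c)^2) ≤ 0 := by
      intro t ht
      have h0 := hnn t ⟨by linarith [ht.1], ht.2.le⟩
      unfold psiC at h0
      by_contra hcon
      push Not at hcon
      have : t^2 - 1 < 0 := by nlinarith [ht.1, ht.2]
      nlinarith [mul_pos_of_neg_of_neg (neg_neg_of_pos hcon) this]
    have hq1 := le_on_closure (s := Set.Ico (0:ℝ) 1) (g := fun _ => (0:ℝ)) hq (by fun_prop) (by fun_prop)
      (x := 1) (by rw [closure_Ico (by norm_num)]; norm_num)
    have hq0 := hq 0 (by norm_num)
    have hr : Real.sqrt (1/3) ^ 2 = 1/3 := Real.sq_sqrt (by norm_num)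
    have hr0 := Real.sqrt_nonneg (1/3)
    have hp := (le_errSup c ξ η (Real.sqrt (1/3))
      ⟨by linarith, by nlinarith⟩).trans (hle.trans hsup)
    have hr4 : Real.sqrt (1/3) ^ 4 = 1/9 := by
      rw [show (4:ℕ) = 2*2 by rfl, pow_mul, hr]; norm_num
    unfold psiC at hp
    rw [hr4, hr] at hp
    generalize Real.sqrt (1 - c^2) = s at *
    have h2 : 1 ≤ η*s + ξ*c := by nlinarith
    refine key_alg c s h ξ η hc0 hc1 hs hss hh (by nlinarith) h2 ?_
    nlinarith
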